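/- For every n ≥ 1, the identity of polynomials 2^n A_{n+1}(z) = z · Σ_{k=0}^{n} C(n,k) B_k(z) B_{n−k}(z) holds, where C(n,k) is the binomial coefficient and B_0(z) = 1. -/

import Mathlib

open Finset Polynomial

/-- The word `π_1 π_2 ⋯ π_n` of a permutation of `[n] = {1,…,n}`, as a function `ℕ → ℤ`,
with the convention that positions outside `{1,…,n}` (in particular position `0`) get value `0`. -/
def permWord (n : ℕ) (σ : Equiv.Perm (Fin n)) : ℕ → ℤ := fun i =>
  if h : 1 ≤ i ∧ i ≤ n then ((σ ⟨i - 1, by omega⟩ : ℕ) : ℤ) + 1 else 0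

/-- A word changes direction at index `i`. -/
def changesDir (w : ℕ → ℤ) (i : ℕ) : Prop :=
  (w (i - 1) < w i ∧ w (i + 1) < w i) ∨ (w i < w (i - 1) ∧ w i < w (i + 1))

instance (w : ℕ → ℤ) : DecidablePred (changesDir w) := fun i => by
  unfold changesDir; infer_instance

/-- The number of alternating runs of a permutation of `[n]`:
one plus the number of indices `i ∈ {2,…,n-1}` where the word changes direction. -/
def runA (n : ℕ) (σ : Equiv.Perm (Fin n)) : ℕ :=
  1 + ((Finset.Icc 2 (n - 1)).filter (changesDir (permWord n σ))).card

/-- The run polynomial `R_n(x) = ∑_{σ ∈ S_n} x^{run σ}`. -/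
noncomputable def runPoly (n : ℕ) : Polynomial ℤ :=
  ∑ σ : Equiv.Perm (Fin n), X ^ runA n σ

/-- `altChain w b l` holds if the values of `w` along the index list `l` alternate,
starting with a strict descent if `b = true` (resp. ascent if `b = false`). -/
def altChain (w : ℕ → ℤ) : Bool → List ℕ → Prop
  | _, [] => True
  | _, [_] => True
  | b, i :: j :: rest => (if b then w j < w i else w i < w j) ∧ altChain w (!b) (j :: rest)

/-- `las n σ` : the maximum length of an alternating subsequence
`σ_{i₁} > σ_{i₂} < σ_{i₃} > ⋯` (indices strictly increasing) of `σ`. -/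
noncomputable def las (n : ℕ) (σ : Equiv.Perm (Fin n)) : ℕ :=
  sSup {k | ∃ l : List ℕ, l.length = k ∧ l.Chain' (· < ·) ∧
    (∀ i ∈ l, 1 ≤ i ∧ i ≤ n) ∧ altChain (permWord n σ) true l}

/-- The set of peaks of a permutation: indices `i ∈ {2,…,n-1}` with `σ_{i-1} < σ_i > σ_{i+1}`. -/
def peakSet (n : ℕ) (σ : Equiv.Perm (Fin n)) : Finset ℕ :=
  (Finset.Icc 2 (n - 1)).filter fun i =>
    permWord n σ (i - 1) < permWord n σ i ∧ permWord n σ (i + 1) < permWord n σ i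

/-- The set of valleys of a permutation: indices `i ∈ {2,…,n-1}` with `σ_{i-1} > σ_i < σ_{i+1}`. -/
def valleySet (n : ℕ) (σ : Equiv.Perm (Fin n)) : Finset ℕ :=
  (Finset.Icc 2 (n - 1)).filter fun i =>
    permWord n σ i < permWord n σ (i - 1) ∧ permWord n σ i < permWord n σ (i + 1)

/-- The set of left peaks of a permutation: indices `i ∈ {1,…,n-1}` with
`σ_{i-1} < σ_i > σ_{i+1}`, with the convention `σ_0 = 0`. -/
def leftPeakSet (n : ℕ) (σ : Equiv.Perm (Fin n)) : Finset ℕ :=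
  (Finset.Icc 1 (n - 1)).filter fun i =>
    permWord n σ (i - 1) < permWord n σ i ∧ permWord n σ (i + 1) < permWord n σ i

/-- The number of descents of a permutation of `[n]`. -/
def desA (n : ℕ) (σ : Equiv.Perm (Fin n)) : ℕ :=
  ((Finset.Icc 1 (n - 1)).filter fun i => permWord n σ (i + 1) < permWord n σ i).card

/-- The maximum letter (as a natural number, `0` for the empty word) of `w₂`, the longest
suffix of `w_1 ⋯ w_{i-1}` all of whose letters exceed `w i`. -/
def w2Max (w : ℕ → ℤ) (i : ℕ) : ℕ :=
  ((Finset.Ico 1 i).filter fun j => ∀ t ∈ Finset.Ico j i, w i < w t).sup fun j => (w j).toNat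

/-- The maximum letter (as a natural number, `0` for the empty word) of `w₄`, the longest
prefix of `w_{i+1} ⋯ w_n` all of whose letters exceed `w i`. -/
def w4Max (n : ℕ) (w : ℕ → ℤ) (i : ℕ) : ℕ :=
  ((Finset.Ioc i n).filter fun j => ∀ t ∈ Finset.Ioc i j, w i < w t).sup fun j => (w j).toNat

/-- André permutation of `[n]`: no double descent, no final descent, and for every
`i ∈ {2,…,n-1}`, in the `π_i`-factorization the maximum letter of `w₂` is smaller than the
maximum letter of `w₄` (maximum of the empty word being `0`). -/
def IsAndre (n : ℕ) (σ : Equiv.Perm (Fin n)) : Prop :=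
  (∀ i ∈ Finset.Icc 2 (n - 1),
      ¬(permWord n σ i < permWord n σ (i - 1) ∧ permWord n σ (i + 1) < permWord n σ i)) ∧
  permWord n σ (n - 1) < permWord n σ n ∧
  ∀ i ∈ Finset.Icc 2 (n - 1), w2Max (permWord n σ) i < w4Max n (permWord n σ) i

/-- `d_{n,i}` : the number of André permutations of `[n]` with exactly `i` descents. -/
noncomputable def andreCount (n i : ℕ) : ℕ :=
  Nat.card {σ : Equiv.Perm (Fin n) // IsAndre n σ ∧ desA n σ = i}

/-- A signed permutation of length `n`: a permutation of `[n]` together with a sign for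
each position. -/
abbrev SignedPerm (n : ℕ) := Equiv.Perm (Fin n) × (Fin n → Bool)

/-- The word `π_1 π_2 ⋯ π_n` of a signed permutation, as a function `ℕ → ℤ`, with the
convention that positions outside `{1,…,n}` (in particular position `0`) get value `0`. -/
def signedWord (n : ℕ) (π : SignedPerm n) : ℕ → ℤ := fun i =>
  if h : 1 ≤ i ∧ i ≤ n then
    (if π.2 ⟨i - 1, by omega⟩ then -(((π.1 ⟨i - 1, by omega⟩ : ℕ) : ℤ) + 1)
      else ((π.1 ⟨i - 1, by omega⟩ : ℕ) : ℤ) + 1)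
  else 0

/-- `run_B` : one plus the number of indices `i ∈ {1,…,n-1}` where the word
`0 π_1 ⋯ π_n` changes direction. -/
def runB (n : ℕ) (π : SignedPerm n) : ℕ :=
  1 + ((Finset.Icc 1 (n - 1)).filter (changesDir (signedWord n π))).card

/-- `des_B` : the number of indices `i ∈ {0,…,n-1}` with `π_i > π_{i+1}`, where `π_0 = 0`. -/
def desB (n : ℕ) (π : SignedPerm n) : ℕ :=
  ((Finset.range n).filter fun i => signedWord n π (i + 1) < signedWord n π i).card

/-- The set of valleys of a signed permutation: indices `i ∈ {1,…,n-1}` with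
`π_{i-1} > π_i < π_{i+1}`, with the convention `π_0 = 0`. -/
def valleysB (n : ℕ) (π : SignedPerm n) : Finset ℕ :=
  (Finset.Icc 1 (n - 1)).filter fun i =>
    signedWord n π i < signedWord n π (i - 1) ∧ signedWord n π i < signedWord n π (i + 1)

/-- The maximum letter of `w₂` (as an element of `WithBot ℤ`, empty word giving `⊥ = -∞`). -/
def w2MaxB (w : ℕ → ℤ) (i : ℕ) : WithBot ℤ :=
  ((Finset.Ico 1 i).filter fun j => ∀ t ∈ Finset.Ico j i, w i < w t).sup fun j =>
    (w j : WithBot ℤ)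

/-- The maximum letter of `w₄` (as an element of `WithBot ℤ`, empty word giving `⊥ = -∞`). -/
def w4MaxB (n : ℕ) (w : ℕ → ℤ) (i : ℕ) : WithBot ℤ :=
  ((Finset.Ioc i n).filter fun j => ∀ t ∈ Finset.Ioc i j, w i < w t).sup fun j =>
    (w j : WithBot ℤ)

/-- Type B André permutation: no double descent, no final descent, and for every valley `i`,
in the `π_i`-factorization the maximum letter of `w₂` is smaller than the maximum letter of
`w₄` (maximum of the empty word being `-∞`). -/
def IsAndreB (n : ℕ) (π : SignedPerm n) : Prop :=
  (∀ i ∈ Finset.Icc 1 (n - 1),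
      ¬(signedWord n π i < signedWord n π (i - 1) ∧ signedWord n π (i + 1) < signedWord n π i)) ∧
  signedWord n π (n - 1) < signedWord n π n ∧
  ∀ i ∈ valleysB n π, w2MaxB (signedWord n π) i < w4MaxB n (signedWord n π) i

/-- The number of negative letters of a signed permutation. -/
def negCount (n : ℕ) (π : SignedPerm n) : ℕ :=
  (Finset.univ.filter fun i => π.2 i = true).card

/-- `R_n^{B,>}(x)`. -/
noncomputable def runPolyBgt (n : ℕ) : Polynomial ℤ :=
  ∑ π : SignedPerm n, if 0 < signedWord n π 1 then X ^ runB n π else 0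

/-- `R_n^{B,<}(x)`. -/
noncomputable def runPolyBlt (n : ℕ) : Polynomial ℤ :=
  ∑ π : SignedPerm n, if signedWord n π 1 < 0 then X ^ runB n π else 0

/-- `R_n^{B}(x)`. -/
noncomputable def runPolyB (n : ℕ) : Polynomial ℤ :=
  ∑ π : SignedPerm n, X ^ runB n π

/-- `R_n^{D,>}(x)`. -/
noncomputable def runPolyDgt (n : ℕ) : Polynomial ℤ :=
  ∑ π : SignedPerm n, if Even (negCount n π) ∧ 0 < signedWord n π 1 then X ^ runB n π else 0

/-- `R_n^{D,<}(x)`. -/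
noncomputable def runPolyDlt (n : ℕ) : Polynomial ℤ :=
  ∑ π : SignedPerm n, if Even (negCount n π) ∧ signedWord n π 1 < 0 then X ^ runB n π else 0

/-- `R_n^{D}(x)`. -/
noncomputable def runPolyD (n : ℕ) : Polynomial ℤ :=
  ∑ π : SignedPerm n, if Even (negCount n π) then X ^ runB n π else 0

/-- The Eulerian polynomial `A_n(x) = ∑_{σ ∈ S_n} x^{des(σ)+1}`. -/
noncomputable def eulerianA (n : ℕ) : Polynomial ℤ :=
  ∑ σ : Equiv.Perm (Fin n), X ^ (desA n σ + 1)

/-- The type B Eulerian polynomial `B_n(x) = ∑_{π ∈ 𝔅_n} x^{des_B(π)}`. -/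
noncomputable def eulerianB (n : ℕ) : Polynomial ℤ :=
  ∑ π : SignedPerm n, X ^ desB n π

/-- `b̄_{n,k}` : the number of type B André permutations of length `n` with `des_B` equal
to `k`. -/
noncomputable def andreBCountDes (n k : ℕ) : ℕ :=
  Nat.card {π : SignedPerm n // IsAndreB n π ∧ desB n π = k}

/-- `b̂_{n,j}` : the number of type B André permutations of length `n` with exactly `j`
valleys. -/
noncomputable def andreBCountVal (n j : ℕ) : ℕ :=
  Nat.card {π : SignedPerm n // IsAndreB n π ∧ (valleysB n π).card = j}

/-- `d̃_{n,k}` : the number of type D André permutations of length `n` (type B André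
permutations with an even number of negative letters) with exactly `k` valleys. -/
noncomputable def andreDCountVal (n k : ℕ) : ℕ :=
  Nat.card {π : SignedPerm n //
    IsAndreB n π ∧ Even (negCount n π) ∧ (valleysB n π).card = k}

/-- The number of permutations of `[n]` with exactly `j` left peaks. -/
noncomputable def leftPeakCount (n j : ℕ) : ℕ :=
  Nat.card {σ : Equiv.Perm (Fin n) // (leftPeakSet n σ).card = j}

/-- `R_n` evaluated at a real number. -/
noncomputable def runPolyReal (n : ℕ) (x : ℝ) : ℝ :=
  ∑ σ : Equiv.Perm (Fin n), x ^ runA n σ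

/-- `A_n` evaluated at a real number. -/
noncomputable def eulerianAReal (n : ℕ) (x : ℝ) : ℝ :=
  ∑ σ : Equiv.Perm (Fin n), x ^ (desA n σ + 1)

/-- `R_n^{B,>}` evaluated at a real number. -/
noncomputable def runPolyBgtReal (n : ℕ) (x : ℝ) : ℝ :=
  ∑ π : SignedPerm n, if 0 < signedWord n π 1 then x ^ runB n π else 0

/-- `B_n` evaluated at a real number. -/
noncomputable def eulerianBReal (n : ℕ) (x : ℝ) : ℝ :=
  ∑ π : SignedPerm n, x ^ desB n π

/-- Number of descents of `w 0, …, w n`. -/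
def dcount (w : ℕ → ℤ) (n : ℕ) : ℕ := ∑ i ∈ Finset.range n, if w (i + 1) < w i then 1 else 0

lemma desB_eq (n : ℕ) (π : SignedPerm n) : desB n π = dcount (signedWord n π) n := by
  simp [desB, dcount]

lemma permWord_eq (n : ℕ) (σ : Equiv.Perm (Fin n)) :
    permWord n σ = signedWord n (σ, fun _ => false) := by
  ext i; simp [permWord, signedWord]

lemma desA_eq (n : ℕ) (σ : Equiv.Perm (Fin n)) :
    desA n σ = dcount (signedWord n (σ, fun _ => false)) n := by
  rw [← permWord_eq]
  simp only [desA, dcount, Finset.card_filter]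
  rcases n with _ | n
  · simp
  rw [Finset.sum_range_succ', if_neg, add_zero, Finset.range_eq_Ico,
    Finset.sum_Ico_add' (fun i => if permWord (n+1) σ (i + 1) < permWord (n+1) σ i then 1 else 0)]
  · rfl
  · simp [permWord]; positivity

lemma dcount_insert (w w' : ℕ → ℤ) (v : ℤ) (n p : ℕ) (hp : p ≤ n)
    (h1 : ∀ i ≤ p, w' i = w i) (h2 : w' (p + 1) = v)
    (h3 : ∀ i, p < i → i ≤ n → w' (i + 1) = w i) :
    dcount w' (n + 1) + (if p < n ∧ w (p + 1) < w p then 1 else 0) =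
      dcount w n + (if v < w p then 1 else 0) + (if p < n ∧ w (p + 1) < v then 1 else 0) := by
  obtain ⟨m, rfl⟩ := Nat.exists_eq_add_of_le hp
  unfold dcount
  rw [add_assoc, Finset.sum_range_add _ p (m + 1), Finset.sum_range_add _ p m]
  have e1 : ∑ i ∈ Finset.range p, (if w' (i + 1) < w' i then 1 else 0) =
      ∑ i ∈ Finset.range p, (if w (i + 1) < w i then 1 else 0) := by
    refine Finset.sum_congr rfl fun i hi => ?_
    have := Finset.mem_range.1 hi
    rw [h1 i (by omega), h1 (i + 1) (by omega)]
  rw [e1]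
  rcases m with _ | k
  · simp only [zero_add, Finset.sum_range_one, Finset.sum_range_zero, add_zero, h1 p le_rfl, h2,
      lt_irrefl, false_and, if_false]
  · rw [Finset.sum_range_succ' _ (k + 1), Finset.sum_range_succ' _ k, Finset.sum_range_succ' _ k]
    have e2 : ∑ j ∈ Finset.range k,
        (if w' (p + (j + 1 + 1) + 1) < w' (p + (j + 1 + 1)) then 1 else 0) =
        ∑ j ∈ Finset.range k, (if w (p + (j + 1) + 1) < w (p + (j + 1)) then 1 else 0) := by
      refine Finset.sum_congr rfl fun i hi => ?_
      have := Finset.mem_range.1 hi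
      rw [h3 (p + (i + 1 + 1)) (by omega) (by omega),
        show p + (i + 1 + 1) = p + (i + 1) + 1 by omega, h3 (p + (i + 1)) (by omega) (by omega)]
    rw [e2]
    have e3 : w' (p + (0 + 1) + 1) = w (p + 1) := h3 (p + 1) (by omega) (by omega)
    have e4 : w' (p + (0 + 1)) = v := h2
    have e6 : w' (p + 0) = w p := h1 p le_rfl
    rw [e3, e4, e6]
    have : p < p + (k + 1) := by omega
    simp only [this, true_and, add_zero]
    omega

/-- Insert the largest letter at position `p`. -/
def insPerm {n : ℕ} (p : Fin (n + 1)) (σ : Equiv.Perm (Fin n)) : Equiv.Perm (Fin (n + 1)) :=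
  (finSuccEquiv' p).trans ((Equiv.optionCongr σ).trans (finSuccEquiv' (Fin.last n)).symm)

lemma insPerm_self {n : ℕ} (p : Fin (n + 1)) (σ : Equiv.Perm (Fin n)) :
    insPerm p σ p = Fin.last n := by
  simp [insPerm]

lemma insPerm_succAbove {n : ℕ} (p : Fin (n + 1)) (σ : Equiv.Perm (Fin n)) (i : Fin n) :
    insPerm p σ (p.succAbove i) = (σ i).castSucc := by
  simp [insPerm]

/-- Insert the largest letter with a sign. -/
def insSigned {n : ℕ} (b : Bool) (p : Fin (n + 1)) (π : SignedPerm n) : SignedPerm (n + 1) :=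
  (insPerm p π.1, p.insertNth b π.2)

lemma insPerm_inj {n : ℕ} {p q : Fin (n + 1)} {σ τ : Equiv.Perm (Fin n)}
    (h : insPerm p σ = insPerm q τ) : p = q ∧ σ = τ := by
  have hpq : p = q := by
    apply (insPerm q τ).injective
    rw [← h, insPerm_self, h, insPerm_self]
  subst hpq
  refine ⟨rfl, ?_⟩
  ext i
  have := insPerm_succAbove p σ i
  rw [h, insPerm_succAbove] at this
  rw [Fin.castSucc_injective _ this]

lemma insPerm_bij (n : ℕ) : Function.Bijective
    (fun x : Fin (n + 1) × Equiv.Perm (Fin n) => insPerm x.1 x.2) := by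
  rw [Fintype.bijective_iff_injective_and_card]
  constructor
  · rintro ⟨p, σ⟩ ⟨q, τ⟩ h
    obtain ⟨rfl, rfl⟩ := insPerm_inj h
    rfl
  · simp [Fintype.card_perm, Nat.factorial_succ]

lemma insSigned_bij (n : ℕ) : Function.Bijective
    (fun x : (Bool × Fin (n + 1)) × SignedPerm n => insSigned x.1.1 x.1.2 x.2) := by
  rw [Fintype.bijective_iff_injective_and_card]
  constructor
  · rintro ⟨⟨b, p⟩, σ, s⟩ ⟨⟨c, q⟩, τ, t⟩ h
    simp only [insSigned, Prod.mk.injEq] at h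
    obtain ⟨h1, h2⟩ := h
    obtain ⟨rfl, rfl⟩ := insPerm_inj h1
    have hb : b = c := by
      have := congrFun h2 p
      simpa using this
    have hs : s = t := by
      ext i
      have := congrFun h2 (p.succAbove i)
      simpa using this
    rw [hb, hs]
  · simp [Fintype.card_perm, Nat.factorial_succ, pow_succ]
    ring

/-- The inserted letter. -/
def insVal (n : ℕ) (b : Bool) : ℤ := if b then -((n : ℤ) + 1) else (n : ℤ) + 1

lemma signedWord_succ (n : ℕ) (π : SignedPerm n) (i : Fin n) : signedWord n π (i + 1) =
    if π.2 i then -(((π.1 i : ℕ) : ℤ) + 1) else ((π.1 i : ℕ) : ℤ) + 1 := by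
  have : (i : ℕ) + 1 ≤ n := i.2
  simp [signedWord, this]

lemma signedWord_bound (n : ℕ) (π : SignedPerm n) (i : ℕ) :
    -((n : ℤ) + 1) < signedWord n π i ∧ signedWord n π i < (n : ℤ) + 1 := by
  unfold signedWord
  split_ifs with h h2
  · have := (π.1 ⟨i - 1, by omega⟩).2
    omega
  · have := (π.1 ⟨i - 1, by omega⟩).2
    omega
  · omega

lemma ins_word_self (n : ℕ) (b : Bool) (p : Fin (n + 1)) (π : SignedPerm n) :
    signedWord (n + 1) (insSigned b p π) (p + 1) = insVal n b := by
  rw [signedWord_succ]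
  simp [insSigned, insPerm_self, insVal]

lemma ins_word_lt (n : ℕ) (b : Bool) (p : Fin (n + 1)) (π : SignedPerm n) (i : ℕ)
    (hi : i ≤ p) : signedWord (n + 1) (insSigned b p π) i = signedWord n π i := by
  rcases i with _ | j
  · simp [signedWord]
  have hp := p.2
  have hj : (⟨j, by omega⟩ : Fin (n + 1)) = p.succAbove ⟨j, by omega⟩ := by
    rw [Fin.succAbove_of_castSucc_lt]
    · rfl
    · exact hi
  have a := signedWord_succ (n + 1) (insSigned b p π) ⟨j, by omega⟩
  have c := signedWord_succ n π ⟨j, by omega⟩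
  simp only at a c
  rw [a, c, hj]
  simp only [insSigned, insPerm_succAbove, Fin.insertNth_apply_succAbove, Fin.val_castSucc]

lemma ins_word_gt (n : ℕ) (b : Bool) (p : Fin (n + 1)) (π : SignedPerm n) (i : ℕ)
    (hi : p < i) (hn : i ≤ n) :
    signedWord (n + 1) (insSigned b p π) (i + 1) = signedWord n π i := by
  rcases i with _ | j
  · omega
  have hj : (⟨j + 1, by omega⟩ : Fin (n + 1)) = p.succAbove ⟨j, by omega⟩ := by
    rw [Fin.succAbove_of_le_castSucc]
    · rfl
    · rw [Fin.le_def]; simp; omega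
  have a := signedWord_succ (n + 1) (insSigned b p π) ⟨j + 1, by omega⟩
  have c := signedWord_succ n π ⟨j, by omega⟩
  simp only at a c
  rw [a, c, hj]
  simp only [insSigned, insPerm_succAbove, Fin.insertNth_apply_succAbove, Fin.val_castSucc]

lemma dcount_ins (n : ℕ) (b : Bool) (p : Fin (n + 1)) (π : SignedPerm n) :
    dcount (signedWord (n + 1) (insSigned b p π)) (n + 1) =
      dcount (signedWord n π) n +
        if (p : ℕ) < n then (if signedWord n π (p + 1) < signedWord n π p then 0 else 1)
        else (if b then 1 else 0) := by
  have h := dcount_insert (signedWord n π) (signedWord (n + 1) (insSigned b p π)) (insVal n b)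
    n p (by have := p.2; omega) (ins_word_lt n b p π) (ins_word_self n b p π)
    (ins_word_gt n b p π)
  have b1 := signedWord_bound n π p
  have b2 := signedWord_bound n π (p + 1)
  cases b
  · have h1 : ¬ insVal n false < signedWord n π p := by simp only [insVal]; simp; omega
    have h2 : signedWord n π (p + 1) < insVal n false := by simp only [insVal]; simp; omega
    simp only [h1, h2, and_true, if_false] at h
    split_ifs at h ⊢ <;> simp_all
  · have h1 : insVal n true < signedWord n π p := by simp only [insVal]; simp; omega
    have h2 : ¬ signedWord n π (p + 1) < insVal n true := by simp only [insVal]; simp; omega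
    simp only [h1, h2, and_false, if_true, if_false] at h
    split_ifs at h ⊢ <;> simp_all

lemma sum_ite_pow (w : ℕ → ℤ) (n d : ℕ) :
    ∑ i ∈ Finset.range n, (X : ℤ[X]) ^ (d + if w (i + 1) < w i then 0 else 1) =
      (dcount w n : ℤ[X]) * X ^ d + ((n : ℤ[X]) - (dcount w n : ℤ[X])) * X ^ (d + 1) := by
  induction n with
  | zero => simp [dcount]
  | succ n ih =>
    rw [Finset.sum_range_succ, ih]
    have : dcount w (n + 1) = dcount w n + if w (n + 1) < w n then 1 else 0 := by
      simp only [dcount, Finset.sum_range_succ]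
    rw [this]
    split_ifs <;> push_cast <;> ring

lemma sum_ins (n : ℕ) (b : Bool) (π : SignedPerm n) :
    ∑ p : Fin (n + 1), (X : ℤ[X]) ^ dcount (signedWord (n + 1) (insSigned b p π)) (n + 1) =
      (dcount (signedWord n π) n : ℤ[X]) * X ^ dcount (signedWord n π) n +
      ((n : ℤ[X]) - (dcount (signedWord n π) n : ℤ[X])) * X ^ (dcount (signedWord n π) n + 1) +
      X ^ (dcount (signedWord n π) n + if b then 1 else 0) := by
  rw [← sum_ite_pow, Fin.sum_univ_castSucc, Finset.sum_range]
  congr 1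
  · refine Finset.sum_congr rfl fun i _ => ?_
    rw [dcount_ins]
    simp
  · rw [dcount_ins]; simp

lemma X_mul_deriv (d : ℕ) : (X : ℤ[X]) * derivative (X ^ d) = (d : ℤ[X]) * X ^ d := by
  rcases d with _ | d
  · simp
  · rw [derivative_X_pow]; simp; ring

/-- `∑ x^{des}`. -/
noncomputable def polyT (n : ℕ) : ℤ[X] :=
  ∑ σ : Equiv.Perm (Fin n), X ^ dcount (signedWord n (σ, fun _ => false)) n

lemma eulerianA_eq (n : ℕ) : eulerianA n = X * polyT n := by
  simp only [eulerianA, polyT, Finset.mul_sum, desA_eq, pow_succ']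

lemma polyT_zero : polyT 0 = 1 := by
  simp [polyT, dcount]

lemma eulerianB_zero : eulerianB 0 = 1 := by
  simp [eulerianB, desB]

lemma polyT_succ (n : ℕ) : polyT (n + 1) =
    (1 + (n : ℤ[X]) * X) * polyT n + X * (1 - X) * derivative (polyT n) := by
  have h1 : polyT (n + 1) = ∑ σ : Equiv.Perm (Fin n), ∑ p : Fin (n + 1),
      (X : ℤ[X]) ^ dcount (signedWord (n + 1) (insSigned false p (σ, fun _ => false))) (n + 1) := by
    unfold polyT
    rw [← (insPerm_bij n).sum_comp, Fintype.sum_prod_type, Finset.sum_comm]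
    refine Finset.sum_congr rfl fun σ _ => Finset.sum_congr rfl fun p _ => ?_
    have : (p.insertNth false (fun _ => false) : Fin (n + 1) → Bool) = fun _ => false := by
      ext i
      refine Fin.succAboveCases p ?_ (fun j => ?_) i <;> simp
    simp only [insSigned, this]
  rw [h1, polyT, derivative_sum, Finset.mul_sum, Finset.mul_sum, ← Finset.sum_add_distrib]
  refine Finset.sum_congr rfl fun σ _ => ?_
  rw [sum_ins, mul_comm X (1 - X), mul_assoc, X_mul_deriv]
  simp
  ring

lemma eulerianB_succ (n : ℕ) : eulerianB (n + 1) =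
    (1 + (2 * (n : ℤ[X]) + 1) * X) * eulerianB n + 2 * X * (1 - X) * derivative (eulerianB n) := by
  have h1 : eulerianB (n + 1) = ∑ π : SignedPerm n, ∑ b : Bool, ∑ p : Fin (n + 1),
      (X : ℤ[X]) ^ dcount (signedWord (n + 1) (insSigned b p π)) (n + 1) := by
    unfold eulerianB
    simp only [desB_eq]
    rw [← (insSigned_bij n).sum_comp, Fintype.sum_prod_type, Finset.sum_comm]
    refine Finset.sum_congr rfl fun σ _ => ?_
    rw [Fintype.sum_prod_type]
  rw [h1, eulerianB, derivative_sum, Finset.mul_sum, Finset.mul_sum, ← Finset.sum_add_distrib]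
  refine Finset.sum_congr rfl fun σ _ => ?_
  simp only [sum_ins, desB_eq]
  rw [mul_comm (2 * X) (1 - X), mul_comm 2 X, mul_assoc, mul_right_comm, X_mul_deriv]
  simp
  ring

/-- The convolution. -/
noncomputable def polyS (n : ℕ) : ℤ[X] :=
  ∑ ij ∈ Finset.HasAntidiagonal.antidiagonal n, (n.choose ij.1 : ℤ[X]) * (eulerianB ij.1 * eulerianB ij.2)

lemma polyS_succ (n : ℕ) : polyS (n + 1) =
    2 * ((1 + ((n : ℤ[X]) + 1) * X) * polyS n + X * (1 - X) * derivative (polyS n)) := by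
  unfold polyS
  rw [Finset.sum_antidiagonal_choose_succ_mul (fun i j => eulerianB i * eulerianB j),
    ← Finset.sum_add_distrib, derivative_sum, Finset.mul_sum, Finset.mul_sum,
    ← Finset.sum_add_distrib, Finset.mul_sum]
  refine Finset.sum_congr rfl fun ij hij => ?_
  obtain ⟨i, j⟩ := ij
  have hn : i + j = n := Finset.HasAntidiagonal.mem_antidiagonal.1 hij
  subst hn
  have hc : (i + j).choose j = (i + j).choose i := (Nat.choose_symm_add).symm
  simp only [hc, eulerianB_succ, derivative_mul, derivative_natCast]
  push_cast
  ring

lemma polyS_eq (n : ℕ) : polyS n = 2 ^ n * polyT (n + 1) := by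
  induction n with
  | zero => rw [polyT_succ, polyT_zero]; simp [polyS, eulerianB_zero]
  | succ n ih =>
    rw [polyS_succ, ih, polyT_succ (n + 1)]
    have : derivative ((2 : ℤ[X]) ^ n * polyT (n + 1)) = 2 ^ n * derivative (polyT (n + 1)) := by
      rw [show (2 : ℤ[X]) ^ n = C (2 ^ n) by simp, derivative_C_mul]
    rw [this]
    push_cast
    ring

/-- For `n ≥ 1`,
`2^n A_{n+1}(z) = z · Σ_{k=0}^{n} C(n,k) B_k(z) B_{n−k}(z)` as polynomials. -/
theorem statement17 (n : ℕ) (hn : 1 ≤ n) :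
    (2 : Polynomial ℤ) ^ n * eulerianA (n + 1) =
      X * ∑ k ∈ Finset.range (n + 1),
        (n.choose k : Polynomial ℤ) * eulerianB k * eulerianB (n - k) := by
  have h := polyS_eq n
  rw [polyS, Finset.Nat.sum_antidiagonal_eq_sum_range_succ_mk] at h
  rw [eulerianA_eq, mul_left_comm, ← h]
  simp only [mul_assoc]
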